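/- Let m ≥ 0 and d ≥ 1 be integers and let L = L_{2d}^{(m)} = 2U ⊕ mE8(−1) ⊕ ⟨−2d⟩. Let r ∈ L be a primitive vector with (r,r) = −2d and div(r) = 2d. Then the orthogonal complement K_r = {x ∈ L : (x,r) = 0}, with the restricted form, is isometric to the even unimodular lattice II_{2,8m+2} = 2U ⊕ mE8(−1). -/

import Mathlib

/-- The hyperbolic plane `U`, with Gram matrix `[[0,1],[1,0]]`. -/
def gramU : Matrix (Fin 2) (Fin 2) ℤ := !![0, 1; 1, 0]

/-- The Gram matrix of `E₈(−1)`: the negated Cartan (= Gram) matrix of the `E₈` root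
lattice. -/
def gramE8neg : Matrix (Fin 8) (Fin 8) ℤ := -CartanMatrix.E₈

/-- The Gram matrix of `m` orthogonal copies of `E₈(−1)`. -/
def gramE8copies (m : ℕ) : Matrix (Fin m × Fin 8) (Fin m × Fin 8) ℤ :=
  Matrix.of fun p q => if p.1 = q.1 then gramE8neg p.2 q.2 else 0

/-- Index set for `II_{2,8m+2} = 2U ⊕ mE₈(−1)`. -/
abbrev IdxII (m : ℕ) : Type := (Fin 2 ⊕ Fin 2) ⊕ Fin m × Fin 8

/-- The Gram matrix of the even unimodular lattice `II_{2,8m+2} = 2U ⊕ mE₈(−1)`. -/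
def gramII (m : ℕ) : Matrix (IdxII m) (IdxII m) ℤ :=
  Matrix.fromBlocks (Matrix.fromBlocks gramU 0 0 gramU) 0 0 (gramE8copies m)

/-- Index set for `L_{2d}^{(m)} = 2U ⊕ mE₈(−1) ⊕ ⟨−2d⟩`. -/
abbrev IdxL (m : ℕ) : Type := IdxII m ⊕ Fin 1

/-- The Gram matrix of `L_{2d}^{(m)} = 2U ⊕ mE₈(−1) ⊕ ⟨−2d⟩`. -/
def gramL (m d : ℕ) : Matrix (IdxL m) (IdxL m) ℤ :=
  Matrix.fromBlocks (gramII m) 0 0 !![-(2 * (d : ℤ))]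

/-- The bilinear form on `ι → ℤ` associated to a Gram matrix `G`:
`⟨x, y⟩ = ∑ i j, x i * G i j * y j`. -/
def bilin {ι : Type} [Fintype ι] (G : Matrix ι ι ℤ) (x y : ι → ℤ) : ℤ :=
  ∑ i, ∑ j, x i * G i j * y j

/-- `r` is primitive: `ℚr ∩ L = ℤr`, equivalently `r` is not a nontrivial integer
multiple of a lattice vector. -/
def IsPrim {ι : Type} (r : ι → ℤ) : Prop :=
  ∀ (k : ℤ) (x : ι → ℤ), r = k • x → IsUnit k

/-- `s = div(r)`: the positive generator of the ideal `{(r,l) : l ∈ L} ⊆ ℤ`. -/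
def IsDivisorOf {ι : Type} [Fintype ι] (G : Matrix ι ι ℤ) (r : ι → ℤ) (s : ℤ) : Prop :=
  0 < s ∧ (∀ l : ι → ℤ, s ∣ bilin G r l) ∧ ∃ l : ι → ℤ, bilin G r l = s

/-- Two lattices, given as `ℤ`-modules with `ℤ`-valued bilinear forms, are isometric. -/
def LatIsometric {M N : Type} [AddCommGroup M] [Module ℤ M] [AddCommGroup N] [Module ℤ N]
    (BM : M → M → ℤ) (BN : N → N → ℤ) : Prop :=
  ∃ e : M ≃ₗ[ℤ] N, ∀ x y : M, BN (e x) (e y) = BM x y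

/-- The orthogonal complement `K_r = {x : (x,r) = 0}` of `r`, as a `ℤ`-submodule. -/
def orthC {ι : Type} [Fintype ι] (G : Matrix ι ι ℤ) (r : ι → ℤ) :
    Submodule ℤ (ι → ℤ) where
  carrier := {x | bilin G x r = 0}
  zero_mem' := by simp [bilin]
  add_mem' := by
    intro a b ha hb
    simp only [Set.mem_setOf_eq, bilin, Pi.add_apply, add_mul, Finset.sum_add_distrib] at *
    rw [ha, hb, add_zero]
  smul_mem' := by
    intro c x hx
    simp only [Set.mem_setOf_eq, bilin, Pi.smul_apply, smul_eq_mul, mul_assoc,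
      ← Finset.mul_sum] at *
    rw [hx, mul_zero]

/-!
Write `q x = (x, x) / 2` and `M = 2U ⊕ mE₈(−1)`. Since `M` is unimodular, `div(r) = 2d` gives
`r = (2d v, c)` with `v ∈ M`, and `(r, r) = −2d` reads `c² = 1 + 4d q(v)`. Eichler transvections
perform Euclid's algorithm on the coordinates of `v`, so an isometry of `M` moves `v` to a vector
`(a, b)` of the first hyperbolic plane. Then `c = 2t + 1` with `t (t + 1) = d a b`, and this
equality of products refines to `t = a₀ b₀ d₀`, `t + 1 = a₁ b₁ d₁` with `a = a₀ a₁`, `b = b₀ b₁`,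
`d = d₀ d₁`. The isotropic vectors `((a₁² d₁, b₀² d₀), a₁ b₀)` and `((a₀² d₀, b₁² d₁), a₀ b₁)` of
`U ⊕ ⟨−2d⟩` are orthogonal to `r` and pair to `(a₁ b₁ d₁ − a₀ b₀ d₀)² = 1`, so they span a
hyperbolic plane; together with the summands of `M` that were left alone it makes up `K_r`.
-/

open QuadraticMap
open scoped Matrix Kronecker

section Hyperbolic

variable {R W : Type*} [CommRing R] [AddCommGroup W] [Module R W]

variable (R) in
/-- The hyperbolic plane `U` over `R`, as the quadratic form `(x, y) ↦ x * y`. An even lattice is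
encoded by the quadratic form `q` with `q x = (x, x) / 2`, whose polar form is `(·, ·)`. -/
def hyperbolicPlane : QuadraticForm R (R × R) :=
  linMulLin (LinearMap.fst R R R) (LinearMap.snd R R R)

@[simp]
theorem hyperbolicPlane_apply (x : R × R) : hyperbolicPlane R x = x.1 * x.2 := rfl

@[simp]
theorem polar_hyperbolicPlane (x y : R × R) :
    polar (hyperbolicPlane R) x y = x.1 * y.2 + x.2 * y.1 := by
  simp only [polar, hyperbolicPlane_apply, Prod.fst_add, Prod.snd_add]
  ring

/-- Multiples of `k` are detected by pairing: if `k` divides `(u, w)` for all `u`, then `w` is a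
multiple of `k`. This is the consequence of unimodularity (including nondegeneracy, at `k = 0`)
that the reduction of vectors needs. -/
def PolarReflectsDvd (Q : QuadraticForm R W) : Prop :=
  ∀ (k : R) (w : W), (∀ u, k ∣ polar Q u w) → ∃ w', w = k • w'

theorem polarReflectsDvd_hyperbolicPlane : PolarReflectsDvd (hyperbolicPlane R) := by
  intro k w h
  obtain ⟨x, hx⟩ : k ∣ w.1 := by simpa using h (0, 1)
  obtain ⟨y, hy⟩ : k ∣ w.2 := by simpa using h (1, 0)
  exact ⟨(x, y), Prod.ext hx hy⟩

theorem PolarReflectsDvd.prod {V : Type*} [AddCommGroup V] [Module R V] {P : QuadraticForm R V}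
    {Q : QuadraticForm R W} (hP : PolarReflectsDvd P) (hQ : PolarReflectsDvd Q) :
    PolarReflectsDvd (P.prod Q) := by
  intro k w h
  obtain ⟨x, hx⟩ := hP k w.1 fun u => by simpa using h (u, 0)
  obtain ⟨y, hy⟩ := hQ k w.2 fun u => by simpa using h (0, u)
  exact ⟨(x, y), Prod.ext hx hy⟩

@[simp]
theorem isometryEquiv_trans_apply {M₁ M₂ M₃ : Type*} [AddCommGroup M₁] [Module R M₁]
    [AddCommGroup M₂] [Module R M₂] [AddCommGroup M₃] [Module R M₃] {Q₁ : QuadraticForm R M₁}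
    {Q₂ : QuadraticForm R M₂} {Q₃ : QuadraticForm R M₃} (e : Q₁.IsometryEquiv Q₂)
    (e' : Q₂.IsometryEquiv Q₃) (x : M₁) : e.trans e' x = e' (e x) := rfl

variable (R) in
/-- The isometry of `U` exchanging the two isotropic coordinate axes. -/
def hyperbolicFlip : (hyperbolicPlane R).IsometryEquiv (hyperbolicPlane R) where
  toLinearEquiv := LinearEquiv.prodComm R R R
  map_app' x := mul_comm x.2 x.1

/-- The isometry of `U ⊕ Q` flipping the hyperbolic plane and fixing the second summand. -/
def flipFst (Q : QuadraticForm R W) :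
    ((hyperbolicPlane R).prod Q).IsometryEquiv ((hyperbolicPlane R).prod Q) :=
  (hyperbolicFlip R).prod (.refl Q)

@[simp]
theorem flipFst_apply (Q : QuadraticForm R W) (v : (R × R) × W) :
    flipFst Q v = ((v.1.2, v.1.1), v.2) := rfl

/-- The underlying linear map of `eichlerTransvection`. -/
def eichlerMap (Q : QuadraticForm R W) (u : W) : (R × R) × W →ₗ[R] (R × R) × W where
  toFun v := ((v.1.1 - polar Q u v.2 - Q u * v.1.2, v.1.2), v.2 + v.1.2 • u)
  map_add' v w := by
    ext
    · simp only [Prod.fst_add, Prod.snd_add, polar_add_right]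
      ring
    · rfl
    · simp only [Prod.fst_add, Prod.snd_add, add_smul]
      abel
  map_smul' k v := by
    ext
    · simp only [Prod.smul_fst, Prod.smul_snd, polar_smul_right, smul_eq_mul, RingHom.id_apply]
      ring
    · rfl
    · simp only [Prod.smul_fst, Prod.smul_snd, smul_add, smul_eq_mul, mul_smul, RingHom.id_apply]

@[simp]
theorem eichlerMap_apply (Q : QuadraticForm R W) (u : W) (v : (R × R) × W) :
    eichlerMap Q u v = ((v.1.1 - polar Q u v.2 - Q u * v.1.2, v.1.2), v.2 + v.1.2 • u) := rfl

theorem eichlerMap_neg_comp_self (Q : QuadraticForm R W) (u : W) (v : (R × R) × W) :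
    eichlerMap Q (-u) (eichlerMap Q u v) = v := by
  ext
  · simp only [eichlerMap_apply, polar_neg_left, polar_add_right, polar_smul_right, polar_self,
      QuadraticMap.map_neg, smul_eq_mul, nsmul_eq_mul]
    push_cast
    ring
  · rfl
  · simp

/-- The Eichler transvection of `U ⊕ Q` attached to the first isotropic axis of `U` and `u`. -/
def eichlerTransvection (Q : QuadraticForm R W) (u : W) :
    ((hyperbolicPlane R).prod Q).IsometryEquiv ((hyperbolicPlane R).prod Q) where
  toLinearEquiv := LinearEquiv.ofLinearMap (eichlerMap Q u) (eichlerMap Q (-u))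
    (LinearMap.ext fun v => by simpa using eichlerMap_neg_comp_self Q (-u) v)
    (LinearMap.ext (eichlerMap_neg_comp_self Q u))
  map_app' v := by
    change (hyperbolicPlane R).prod Q (eichlerMap Q u v) = _
    simp only [eichlerMap_apply, prod_apply, hyperbolicPlane_apply, QuadraticMap.map_add Q,
      QuadraticMap.map_smul, polar_comm Q v.2, polar_smul_left, smul_eq_mul]
    ring

@[simp]
theorem eichlerTransvection_apply (Q : QuadraticForm R W) (u : W) (v : (R × R) × W) :
    eichlerTransvection Q u v =
      ((v.1.1 - polar Q u v.2 - Q u * v.1.2, v.1.2), v.2 + v.1.2 • u) := rfl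

theorem exists_isometryEquiv_fst_snd_ne_zero {Q : QuadraticForm R W} (hQ : PolarReflectsDvd Q)
    {v : (R × R) × W} (hv : v ≠ 0) :
    ∃ e : ((hyperbolicPlane R).prod Q).IsometryEquiv ((hyperbolicPlane R).prod Q),
      (e v).1.2 ≠ 0 := by
  obtain ⟨⟨x, y⟩, w⟩ := v
  by_cases hy : y = 0
  · by_cases hx : x = 0
    · obtain ⟨u, hu⟩ : ∃ u, ¬ 0 ∣ polar Q u w := by
        by_contra! h
        obtain ⟨w', hw'⟩ := hQ 0 w h
        exact hv (by simp [hx, hy, hw'])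
      exact ⟨(eichlerTransvection Q u).trans (flipFst Q), by
        simpa [hx, hy, zero_dvd_iff] using hu⟩
    · exact ⟨flipFst Q, hx⟩
  · exact ⟨.refl _, hy⟩

/-- The quadratic form `U ⊕ U ⊕ Q`. -/
abbrev twoHyperbolicSum (Q : QuadraticForm R W) : QuadraticForm R ((R × R) × (R × R) × W) :=
  (hyperbolicPlane R).prod ((hyperbolicPlane R).prod Q)

/-- The isometry of `U ⊕ U ⊕ Q` exchanging the two hyperbolic planes. -/
def swapPlanes (Q : QuadraticForm R W) :
    (twoHyperbolicSum Q).IsometryEquiv (twoHyperbolicSum Q) where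
  toLinearEquiv := LinearEquiv.prodAssoc R (R × R) (R × R) W |>.symm
    |>.trans ((LinearEquiv.prodComm R (R × R) (R × R)).prodCongr (.refl R W))
    |>.trans (LinearEquiv.prodAssoc R (R × R) (R × R) W)
  map_app' _ := add_left_comm _ _ _

@[simp]
theorem swapPlanes_apply (Q : QuadraticForm R W) (v : (R × R) × (R × R) × W) :
    swapPlanes Q v = (v.2.1, v.1, v.2.2) := rfl

end Hyperbolic

section Reduction

variable {R W : Type*} [EuclideanDomain R] [AddCommGroup W] [Module R W]
  {Q : QuadraticForm R W}

/-- The second coordinate of `v` in the plane `U` is nonzero, and minimal for the Euclidean order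
among the nonzero second coordinates of vectors in the orbit of `v` under the isometries of
`U ⊕ Q`. -/
def IsOrbitMinimal (Q : QuadraticForm R W) (v : (R × R) × W) : Prop :=
  v.1.2 ≠ 0 ∧ ∀ e : ((hyperbolicPlane R).prod Q).IsometryEquiv ((hyperbolicPlane R).prod Q),
    (e v).1.2 ≠ 0 → ¬ EuclideanDomain.r (e v).1.2 v.1.2

theorem exists_isOrbitMinimal (hQ : PolarReflectsDvd Q) {v : (R × R) × W} (hv : v ≠ 0) :
    ∃ e : ((hyperbolicPlane R).prod Q).IsometryEquiv ((hyperbolicPlane R).prod Q),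
      IsOrbitMinimal Q (e v) := by
  obtain ⟨e, he, hmin⟩ := (InvImage.wf
    (fun e : ((hyperbolicPlane R).prod Q).IsometryEquiv ((hyperbolicPlane R).prod Q) => (e v).1.2)
    EuclideanDomain.r_wellFounded).has_min {e | (e v).1.2 ≠ 0}
      (exists_isometryEquiv_fst_snd_ne_zero hQ hv)
  exact ⟨e, he, fun e' => hmin (e.trans e')⟩

theorem IsOrbitMinimal.map {v : (R × R) × W} (hv : IsOrbitMinimal Q v)
    (e : ((hyperbolicPlane R).prod Q).IsometryEquiv ((hyperbolicPlane R).prod Q))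
    (he : (e v).1.2 = v.1.2) : IsOrbitMinimal Q (e v) :=
  ⟨he ▸ hv.1, fun e' => he ▸ hv.2 (e.trans e')⟩

theorem IsOrbitMinimal.dvd_fst_snd {v : (R × R) × (R × R) × W}
    (hv : IsOrbitMinimal ((hyperbolicPlane R).prod Q) v) : v.1.2 ∣ v.2.1.1 := by
  -- Divide with remainder: adding `-(x' / y)` times `y` to `x'` leaves `x' % y`.
  let e := ((eichlerTransvection ((hyperbolicPlane R).prod Q) ((-(v.2.1.1 / v.1.2), 0), 0)).trans
    (swapPlanes Q)).trans (flipFst _)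
  have he : (e v).1.2 = v.2.1.1 % v.1.2 := by
    simp [e, EuclideanDomain.mod_eq_sub_mul_div, sub_eq_add_neg]
  by_contra hdvd
  refine hv.2 e ?_ (he ▸ EuclideanDomain.mod_lt _ hv.1)
  rwa [he, Ne, EuclideanDomain.mod_eq_zero]

theorem IsOrbitMinimal.exists_snd_eq_smul {v : (R × R) × (R × R) × W}
    (hv : IsOrbitMinimal ((hyperbolicPlane R).prod Q) v) (hQ : PolarReflectsDvd Q) :
    ∃ n, v.2 = v.1.2 • n := by
  -- Isometries of the second summand preserve minimality.
  have dvd_map (g : ((hyperbolicPlane R).prod Q).IsometryEquiv ((hyperbolicPlane R).prod Q)) :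
      v.1.2 ∣ (g v.2).1.1 := (hv.map ((QuadraticMap.IsometryEquiv.refl _).prod g) rfl).dvd_fst_snd
  obtain ⟨x, hx⟩ : v.1.2 ∣ v.2.1.1 := dvd_map (.refl _)
  obtain ⟨y, hy⟩ : v.1.2 ∣ v.2.1.2 := dvd_map (flipFst Q)
  obtain ⟨w, hw⟩ := hQ v.1.2 v.2.2 fun u => by
    have h := dvd_map (eichlerTransvection Q u)
    rw [eichlerTransvection_apply, hx, hy] at h
    simpa [dvd_sub_right, dvd_sub_left, mul_left_comm (Q u), dvd_mul_right] using h
  exact ⟨((x, y), w), Prod.ext (Prod.ext hx hy) hw⟩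

theorem exists_isometryEquiv_snd_eq_zero (hQ : PolarReflectsDvd Q) (v : (R × R) × (R × R) × W) :
    ∃ e : (twoHyperbolicSum Q).IsometryEquiv (twoHyperbolicSum Q), (e v).2 = 0 := by
  by_cases hv : v = 0
  · exact ⟨.refl _, by simp [hv]⟩
  · obtain ⟨e, he⟩ := exists_isOrbitMinimal (polarReflectsDvd_hyperbolicPlane.prod hQ) hv
    obtain ⟨n, hn⟩ := he.exists_snd_eq_smul hQ
    exact ⟨e.trans (eichlerTransvection _ (-n)), by simp [hn]⟩

end Reduction

section Complement

variable {R M : Type*} [CommRing R] [AddCommGroup M] [Module R M]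

/-- The quadratic form of `Q ⊕ ⟨-2d⟩`. -/
def addNegLine (Q : QuadraticForm R M) (d : R) : QuadraticForm R (M × R) :=
  Q.prod (-d • QuadraticMap.sq)

@[simp]
theorem addNegLine_apply (Q : QuadraticForm R M) (d : R) (p : M × R) :
    addNegLine Q d p = Q p.1 - d * p.2 ^ 2 := by
  simp only [addNegLine, prod_apply, _root_.smul_apply, sq_apply, smul_eq_mul]
  ring

@[simp]
theorem polar_addNegLine (Q : QuadraticForm R M) (d : R) (p p' : M × R) :
    polar (addNegLine Q d) p p' = polar Q p.1 p'.1 - 2 * d * p.2 * p'.2 := by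
  rw [addNegLine, polar_prod]
  simp only [polar, _root_.smul_apply, sq_apply, smul_eq_mul]
  ring

/-- `Q` is isometric to the orthogonal complement of `(2d • v, c)` in `Q ⊕ ⟨-2d⟩`. Orthogonality
to that vector is recorded after division by `2d`, which is equivalent when `2d` is a
nonzerodivisor. -/
def IsometricToComplement (Q : QuadraticForm R M) (d : R) (v : M) (c : R) : Prop :=
  ∃ f : Q →qᵢ addNegLine Q d, Function.Injective f ∧
    ∀ p, p ∈ Set.range f ↔ polar Q p.1 v = c * p.2

theorem polar_isometry_map {M' : Type*} [AddCommGroup M'] [Module R M']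
    {Q : QuadraticForm R M} {Q' : QuadraticForm R M'} (f : Q →qᵢ Q') (x y : M) :
    polar Q' (f x) (f y) = polar Q x y := by
  simp only [polar, ← map_add, Isometry.map_app]

theorem mem_range_symm_comp_comp {α β γ δ : Type*} (e : γ ≃ δ) (f : β → δ) {g : α → β}
    (hg : Function.Surjective g) (x : γ) :
    x ∈ Set.range (e.symm ∘ f ∘ g) ↔ e x ∈ Set.range f := by
  rw [← Function.comp_assoc, hg.range_comp, Set.range_comp, e.symm.image_eq_preimage_symm]
  rfl

theorem IsometricToComplement.of_isometryEquiv {M' : Type*} [AddCommGroup M'] [Module R M']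
    {Q : QuadraticForm R M} {Q' : QuadraticForm R M'} {d c : R} {v : M} (e : Q.IsometryEquiv Q')
    (h : IsometricToComplement Q' d (e v) c) : IsometricToComplement Q d v c := by
  obtain ⟨f, hf, hrange⟩ := h
  let E : (addNegLine Q d).IsometryEquiv (addNegLine Q' d) := e.prod (.refl _)
  refine ⟨(E.symm.toIsometry.comp f).comp e.toIsometry,
    E.symm.injective.comp (hf.comp e.injective), fun p => ?_⟩
  calc p ∈ Set.range (E.symm ∘ f ∘ e)
      ↔ E p ∈ Set.range f :=
        mem_range_symm_comp_comp E.toEquiv f (EquivLike.surjective e) p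
    _ ↔ polar Q p.1 v = c * p.2 := by
        rw [hrange, ← polar_isometry_map e.toIsometry]
        rfl

theorem exists_factorization_of_mul_eq_mul {α : Type*} [CommMonoidWithZero α]
    [IsLeftCancelMulZero α] [DecompositionMonoid α] {x y a b : α} (h : x * y = a * b) :
    ∃ a₀ a₁ b₀ b₁, a = a₀ * a₁ ∧ b = b₀ * b₁ ∧ x = a₀ * b₀ ∧ y = a₁ * b₁ := by
  by_cases ha : a = 0
  · rw [ha, zero_mul] at h
    rcases mul_eq_zero.1 h with rfl | rfl
    · exact ⟨0, y, b, 1, by simp [ha]⟩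
    · exact ⟨x, 0, 1, b, by simp [ha]⟩
  · obtain ⟨a₀, a₁, ⟨b₀, rfl⟩, ⟨b₁, rfl⟩, rfl⟩ := exists_dvd_and_dvd_of_dvd_mul (Dvd.intro b h.symm)
    refine ⟨a₀, a₁, b₀, b₁, rfl, mul_left_cancel₀ ha ?_, rfl, rfl⟩
    rw [← h, mul_mul_mul_comm]

theorem exists_factorization_of_mul_eq_mul_mul {α : Type*} [CommMonoidWithZero α]
    [IsLeftCancelMulZero α] [DecompositionMonoid α] {x y d a b : α}
    (h : x * y = d * (a * b)) :
    ∃ a₀ a₁ b₀ b₁ d₀ d₁, a = a₀ * a₁ ∧ b = b₀ * b₁ ∧ d = d₀ * d₁ ∧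
      x = a₀ * b₀ * d₀ ∧ y = a₁ * b₁ * d₁ := by
  obtain ⟨d₀, d₁, s₀, s₁, hd', hs, rfl, rfl⟩ := exists_factorization_of_mul_eq_mul h
  obtain ⟨a₀, a₁, b₀, b₁, ha, hb, rfl, rfl⟩ := exists_factorization_of_mul_eq_mul hs.symm
  exact ⟨a₀, a₁, b₀, b₁, d₀, d₁, ha, hb, hd', mul_comm _ _, mul_comm _ _⟩

end Complement

section HyperbolicPair

variable {R W : Type*} [CommRing R] [AddCommGroup W] [Module R W]

/-- The map `U ⊕ Q → (U ⊕ Q) ⊕ ⟨-2 d₀ d₁⟩` fixing `Q` and sending the standard basis of `U` to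
`((a₁² d₁, b₀² d₀), a₁ b₀)` and `((a₀² d₀, b₁² d₁), a₀ b₁)`. -/
def hyperbolicPairMap (W : Type*) [AddCommGroup W] [Module R W] (a₀ a₁ b₀ b₁ d₀ d₁ : R) :
    (R × R) × W →ₗ[R] ((R × R) × W) × R where
  toFun v := (((v.1.1 * (a₁ ^ 2 * d₁) + v.1.2 * (a₀ ^ 2 * d₀),
    v.1.1 * (b₀ ^ 2 * d₀) + v.1.2 * (b₁ ^ 2 * d₁)), v.2), v.1.1 * (a₁ * b₀) + v.1.2 * (a₀ * b₁))
  map_add' v w := by ext <;> simp <;> ring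
  map_smul' k v := by ext <;> simp <;> ring

/-- The left inverse of `hyperbolicPairMap`, pairing the `U ⊕ ⟨-2 d₀ d₁⟩` component of `p` with
the images of the standard basis of `U`. -/
def hyperbolicPairCoords (a₀ a₁ b₀ b₁ d₀ d₁ : R) (p : ((R × R) × W) × R) : (R × R) × W :=
  ((p.1.1.1 * (b₁ ^ 2 * d₁) + p.1.1.2 * (a₀ ^ 2 * d₀) - 2 * (d₀ * d₁) * p.2 * (a₀ * b₁),
    p.1.1.1 * (b₀ ^ 2 * d₀) + p.1.1.2 * (a₁ ^ 2 * d₁) - 2 * (d₀ * d₁) * p.2 * (a₁ * b₀)), p.1.2)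

variable {a₀ a₁ b₀ b₁ d₀ d₁ : R}

theorem hyperbolicPairCoords_hyperbolicPairMap (h : a₁ * b₁ * d₁ = a₀ * b₀ * d₀ + 1)
    (v : (R × R) × W) :
    hyperbolicPairCoords a₀ a₁ b₀ b₁ d₀ d₁ (hyperbolicPairMap W a₀ a₁ b₀ b₁ d₀ d₁ v) = v := by
  obtain ⟨⟨x, y⟩, w⟩ := v
  simp only [hyperbolicPairCoords, hyperbolicPairMap, LinearMap.coe_mk, AddHom.coe_mk,
    Prod.mk.injEq, and_true]
  constructor
  · linear_combination x * (a₁ * b₁ * d₁ - a₀ * b₀ * d₀ + 1) * h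
  · linear_combination y * (a₁ * b₁ * d₁ - a₀ * b₀ * d₀ + 1) * h

theorem hyperbolicPairMap_hyperbolicPairCoords (h : a₁ * b₁ * d₁ = a₀ * b₀ * d₀ + 1)
    {p : ((R × R) × W) × R}
    (hp : p.1.1.1 * (b₀ * b₁) + p.1.1.2 * (a₀ * a₁) = (a₀ * b₀ * d₀ + a₁ * b₁ * d₁) * p.2) :
    hyperbolicPairMap W a₀ a₁ b₀ b₁ d₀ d₁ (hyperbolicPairCoords a₀ a₁ b₀ b₁ d₀ d₁ p) = p := by
  obtain ⟨⟨⟨x, y⟩, w⟩, z⟩ := p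
  simp only at hp
  simp only [hyperbolicPairCoords, hyperbolicPairMap, LinearMap.coe_mk, AddHom.coe_mk,
    Prod.mk.injEq, and_true]
  set s := a₁ * b₁ * d₁ - a₀ * b₀ * d₀ + 1
  refine ⟨⟨?_, ?_⟩, ?_⟩
  · linear_combination 2 * d₀ * d₁ * a₀ * a₁ * hp + x * s * h
  · linear_combination 2 * d₀ * d₁ * b₀ * b₁ * hp + y * s * h
  · linear_combination (a₁ * b₁ * d₁ + a₀ * b₀ * d₀) * hp + z * s * h

theorem addNegLine_hyperbolicPairMap (Q : QuadraticForm R W)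
    (h : a₁ * b₁ * d₁ = a₀ * b₀ * d₀ + 1) (v : (R × R) × W) :
    addNegLine ((hyperbolicPlane R).prod Q) (d₀ * d₁) (hyperbolicPairMap W a₀ a₁ b₀ b₁ d₀ d₁ v) =
      (hyperbolicPlane R).prod Q v := by
  obtain ⟨⟨x, y⟩, w⟩ := v
  simp only [hyperbolicPairMap, LinearMap.coe_mk, AddHom.coe_mk, addNegLine_apply, prod_apply,
    hyperbolicPlane_apply]
  linear_combination x * y * (a₁ * b₁ * d₁ - a₀ * b₀ * d₀ + 1) * h

theorem isometricToComplement_of_factorization (Q : QuadraticForm R W)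
    (h : a₁ * b₁ * d₁ = a₀ * b₀ * d₀ + 1) :
    IsometricToComplement ((hyperbolicPlane R).prod Q) (d₀ * d₁) ((a₀ * a₁, b₀ * b₁), 0)
      (a₀ * b₀ * d₀ + a₁ * b₁ * d₁) := by
  refine ⟨⟨hyperbolicPairMap W a₀ a₁ b₀ b₁ d₀ d₁, addNegLine_hyperbolicPairMap Q h⟩,
    Function.LeftInverse.injective (hyperbolicPairCoords_hyperbolicPairMap h), fun p => ?_⟩
  simp only [polar_prod, polar_hyperbolicPlane, polar_zero_right, add_zero]
  constructor
  · rintro ⟨⟨⟨x, y⟩, w⟩, rfl⟩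
    change (x * (a₁ ^ 2 * d₁) + y * (a₀ ^ 2 * d₀)) * (b₀ * b₁) +
      (x * (b₀ ^ 2 * d₀) + y * (b₁ ^ 2 * d₁)) * (a₀ * a₁) =
      (a₀ * b₀ * d₀ + a₁ * b₁ * d₁) * (x * (a₁ * b₀) + y * (a₀ * b₁))
    ring
  · exact fun hp => ⟨_, hyperbolicPairMap_hyperbolicPairCoords h hp⟩

end HyperbolicPair

theorem isometricToComplement_twoHyperbolicSum {R W : Type*} [EuclideanDomain R] [AddCommGroup W]
    [Module R W] {Q : QuadraticForm R W} (hQ : PolarReflectsDvd Q) {d t : R}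
    {v : (R × R) × (R × R) × W} (h : t * (t + 1) = d * twoHyperbolicSum Q v) :
    IsometricToComplement (twoHyperbolicSum Q) d v (t + (t + 1)) := by
  obtain ⟨e, he⟩ := exists_isometryEquiv_snd_eq_zero hQ v
  rcases hev : e v with ⟨⟨a, b⟩, n⟩
  obtain rfl : n = 0 := by simpa [hev] using he
  rw [← e.map_app, hev, prod_apply, map_zero, add_zero, hyperbolicPlane_apply] at h
  obtain ⟨a₀, a₁, b₀, b₁, d₀, d₁, rfl, rfl, rfl, ht, ht'⟩ :=
    exists_factorization_of_mul_eq_mul_mul h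
  refine .of_isometryEquiv e ?_
  rw [hev, ht', ht]
  exact isometricToComplement_of_factorization _ (by rw [← ht', ← ht])

theorem exists_isometry_range_eq_orthogonal {W : Type*} [AddCommGroup W] {Q : QuadraticForm ℤ W}
    (hQ : PolarReflectsDvd Q) {d : ℤ} (hd : d ≠ 0) {r : ((ℤ × ℤ) × (ℤ × ℤ) × W) × ℤ}
    (hr : addNegLine (twoHyperbolicSum Q) d r = -d)
    (hdiv : ∀ p, 2 * d ∣ polar (addNegLine (twoHyperbolicSum Q) d) p r) :
    ∃ f : twoHyperbolicSum Q →qᵢ addNegLine (twoHyperbolicSum Q) d, Function.Injective f ∧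
      ∀ p, p ∈ Set.range f ↔ polar (addNegLine (twoHyperbolicSum Q) d) p r = 0 := by
  have h2d : 2 * d ≠ 0 := mul_ne_zero two_ne_zero hd
  obtain ⟨r₁, c⟩ := r
  obtain ⟨v, rfl⟩ : ∃ v, r₁ = (2 * d) • v :=
    polarReflectsDvd_hyperbolicPlane.prod (polarReflectsDvd_hyperbolicPlane.prod hQ) _ _
      fun u => by simpa only [polar_addNegLine, mul_zero, zero_mul, sub_zero] using hdiv (u, 0)
  have hc : c ^ 2 = 1 + 4 * d * twoHyperbolicSum Q v := by
    rw [addNegLine_apply, QuadraticMap.map_smul, smul_eq_mul] at hr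
    exact mul_left_cancel₀ hd (by linear_combination -hr)
  obtain ⟨t, rfl⟩ : Odd c := by
    have hodd : Odd (c ^ 2) := ⟨2 * d * twoHyperbolicSum Q v, by rw [hc]; ring⟩
    exact (Int.odd_pow' two_ne_zero).1 hodd
  obtain ⟨f, hf, hrange⟩ := isometricToComplement_twoHyperbolicSum hQ (d := d) (v := v) (t := t)
    (by linarith)
  refine ⟨f, hf, fun p => (hrange p).trans ?_⟩
  have hpolar : polar (addNegLine (twoHyperbolicSum Q) d) p ((2 * d) • v, 2 * t + 1) =
      2 * d * (polar (twoHyperbolicSum Q) p.1 v - (t + (t + 1)) * p.2) := by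
    rw [polar_addNegLine, polar_smul_right, smul_eq_mul]
    ring
  rw [hpolar, mul_eq_zero, or_iff_right h2d, sub_eq_zero]

section Gram

variable {ι κ : Type} [Fintype ι] [Fintype κ]

theorem bilin_eq_toBilin' [DecidableEq ι] (G : Matrix ι ι ℤ) (x y : ι → ℤ) :
    bilin G x y = Matrix.toBilin' G x y :=
  (Matrix.toBilin'_apply G x y).symm

theorem bilin_fromBlocks (A : Matrix ι ι ℤ) (D : Matrix κ κ ℤ) (x y : ι ⊕ κ → ℤ) :
    bilin (Matrix.fromBlocks A 0 0 D) x y =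
      bilin A (x ∘ Sum.inl) (y ∘ Sum.inl) + bilin D (x ∘ Sum.inr) (y ∘ Sum.inr) := by
  simp [bilin, Fintype.sum_sum_type]

theorem bilin_gramU (x y : Fin 2 → ℤ) : bilin gramU x y = x 0 * y 1 + x 1 * y 0 := by
  simp [bilin, gramU]

theorem bilin_comm {G : Matrix ι ι ℤ} (hG : G.IsSymm) (x y : ι → ℤ) :
    bilin G x y = bilin G y x := by
  classical
  rw [bilin_eq_toBilin', bilin_eq_toBilin', Matrix.toBilin'_apply', Matrix.toBilin'_apply',
    dotProduct_comm, ← Matrix.vecMul_transpose, hG.eq, Matrix.dotProduct_mulVec]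

theorem exists_quadraticForm_polar_eq {M : Type*} [AddCommGroup M] {B : LinearMap.BilinForm ℤ M}
    (hsymm : ∀ x y, B x y = B y x) (heven : ∀ x, Even (B x x)) :
    ∃ Q : QuadraticForm ℤ M, ∀ x y, polar Q x y = B x y := by
  choose q hq using fun x => (heven x).two_dvd
  have hpolar (x y : M) : polar q x y = B x y := by
    have h := hq (x + y)
    simp only [map_add, LinearMap.add_apply, hsymm y x, hq x, hq y] at h
    rw [polar]
    linarith
  refine ⟨.ofPolar q (fun k x => ?_) (fun x x' y => ?_) (fun k x y => ?_), hpolar⟩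
  · have h := hq (k • x)
    simp only [map_smul, LinearMap.smul_apply, smul_eq_mul, hq x] at h ⊢
    linarith
  · simp only [hpolar, map_add, LinearMap.add_apply]
  · simp only [hpolar, map_smul, LinearMap.smul_apply]

theorem even_apply_self_of_basis {ι M : Type*} [AddCommGroup M] {B : LinearMap.BilinForm ℤ M}
    (hsymm : ∀ x y, B x y = B y x) (b : Module.Basis ι ℤ M) (heven : ∀ i, Even (B (b i) (b i)))
    (x : M) : Even (B x x) := by
  induction b.mem_span x using Submodule.span_induction with
  | mem x hx => obtain ⟨i, rfl⟩ := hx; exact heven i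
  | zero => simp
  | add x y _ _ hx hy =>
    have h : B (x + y) (x + y) = B x x + B y y + 2 * B x y := by
      simp only [map_add, LinearMap.add_apply, hsymm y x]
      ring
    exact h ▸ (hx.add hy).add (even_two_mul _)
  | smul k x _ hx =>
    simpa only [map_smul, LinearMap.smul_apply, smul_eq_mul] using (hx.mul_left k).mul_left k

theorem exists_eq_smul_of_dvd_bilin [DecidableEq ι] {G : Matrix ι ι ℤ} (hG : IsUnit G.det) {k : ℤ}
    {w : ι → ℤ} (h : ∀ u, k ∣ bilin G u w) : ∃ w', w = k • w' := by
  have hGw (i : ι) : k ∣ (G *ᵥ w) i := by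
    simpa [bilin_eq_toBilin', Matrix.toBilin'_apply'] using h (Pi.single i 1)
  choose z hz using hGw
  refine ⟨G⁻¹ *ᵥ z, ?_⟩
  rw [← Matrix.mulVec_smul, ← show G *ᵥ w = k • z from funext hz, Matrix.mulVec_mulVec,
    Matrix.nonsing_inv_mul G hG, Matrix.one_mulVec]

end Gram

section Coordinates

variable {ι κ : Type} [Fintype ι] [Fintype κ]

/-- The Gram matrix of `U ⊕ U ⊕ G`. -/
def gramTwoU (G : Matrix ι ι ℤ) : Matrix ((Fin 2 ⊕ Fin 2) ⊕ ι) ((Fin 2 ⊕ Fin 2) ⊕ ι) ℤ :=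
  Matrix.fromBlocks (Matrix.fromBlocks gramU 0 0 gramU) 0 0 G

/-- The Gram matrix of `U ⊕ U ⊕ G ⊕ ⟨-2d⟩`. -/
def gramTwoULine (G : Matrix ι ι ℤ) (d : ℤ) :
    Matrix (((Fin 2 ⊕ Fin 2) ⊕ ι) ⊕ Fin 1) (((Fin 2 ⊕ Fin 2) ⊕ ι) ⊕ Fin 1) ℤ :=
  Matrix.fromBlocks (gramTwoU G) 0 0 !![-(2 * d)]

variable (ι) in
/-- Identifies the coordinates of `gramTwoU` with the module carrying `twoHyperbolicSum`. -/
def twoUCoords : ((Fin 2 ⊕ Fin 2) ⊕ ι → ℤ) ≃ₗ[ℤ] (ℤ × ℤ) × (ℤ × ℤ) × (ι → ℤ) :=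
  LinearEquiv.sumArrowLequivProdArrow _ _ ℤ ℤ
    |>.trans ((LinearEquiv.sumArrowLequivProdArrow _ _ ℤ ℤ
      |>.trans ((LinearEquiv.finTwoArrow ℤ ℤ).prodCongr (LinearEquiv.finTwoArrow ℤ ℤ))).prodCongr
        (.refl ℤ (ι → ℤ)))
    |>.trans (LinearEquiv.prodAssoc ℤ (ℤ × ℤ) (ℤ × ℤ) (ι → ℤ))

variable (ι) in
/-- Extends `twoUCoords` by the coordinate of the line in `addNegLine`. -/
def twoULineCoords :
    (((Fin 2 ⊕ Fin 2) ⊕ ι) ⊕ Fin 1 → ℤ) ≃ₗ[ℤ] ((ℤ × ℤ) × (ℤ × ℤ) × (ι → ℤ)) × ℤ :=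
  LinearEquiv.sumArrowLequivProdArrow _ _ ℤ ℤ
    |>.trans ((twoUCoords ι).prodCongr (LinearEquiv.funUnique (Fin 1) ℤ ℤ))

variable {G : Matrix ι ι ℤ} {Q : QuadraticForm ℤ (ι → ℤ)}

theorem polar_twoUCoords (hQ : ∀ x y, polar Q x y = bilin G x y)
    (x y : (Fin 2 ⊕ Fin 2) ⊕ ι → ℤ) :
    polar (twoHyperbolicSum Q) (twoUCoords ι x) (twoUCoords ι y) = bilin (gramTwoU G) x y := by
  rw [gramTwoU, bilin_fromBlocks, bilin_fromBlocks, bilin_gramU, bilin_gramU, ← hQ, add_assoc,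
    polar_prod, polar_prod, polar_hyperbolicPlane, polar_hyperbolicPlane]
  rfl

theorem polar_twoULineCoords (hQ : ∀ x y, polar Q x y = bilin G x y) (d : ℤ)
    (x y : ((Fin 2 ⊕ Fin 2) ⊕ ι) ⊕ Fin 1 → ℤ) :
    polar (addNegLine (twoHyperbolicSum Q) d) (twoULineCoords ι x) (twoULineCoords ι y) =
      bilin (gramTwoULine G d) x y := by
  have hline : bilin !![-(2 * d)] (x ∘ Sum.inr) (y ∘ Sum.inr) =
      -(2 * d * x (.inr 0) * y (.inr 0)) := by
    simp only [bilin, Fin.sum_univ_one, Function.comp_apply, Matrix.of_apply,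
      Matrix.cons_val_fin_one]
    ring
  rw [gramTwoULine, bilin_fromBlocks, ← polar_twoUCoords hQ, hline, polar_addNegLine,
    ← sub_eq_add_neg]
  rfl

theorem latIsometric_orthC {G : Matrix ι ι ℤ} {H : Matrix κ κ ℤ} {r : ι → ℤ}
    (f : (κ → ℤ) →ₗ[ℤ] ι → ℤ) (hf : Function.Injective f)
    (hrange : ∀ x, x ∈ Set.range f ↔ bilin G x r = 0)
    (hform : ∀ x y, bilin G (f x) (f y) = bilin H x y) :
    LatIsometric (fun x y : orthC G r => bilin G x y) (bilin H) := by
  let e : (κ → ℤ) ≃ₗ[ℤ] orthC G r := (LinearEquiv.ofInjective f hf).trans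
    (LinearEquiv.ofEq _ _ (Submodule.ext hrange))
  refine ⟨e.symm, fun x y => ?_⟩
  obtain ⟨x, rfl⟩ := e.surjective x
  obtain ⟨y, rfl⟩ := e.surjective y
  rw [e.symm_apply_apply, e.symm_apply_apply]
  exact (hform x y).symm

end Coordinates

theorem exists_quadraticForm_polar_eq_bilin {ι : Type} [Fintype ι]
    {G : Matrix ι ι ℤ} (hG : G.IsSymm) (heven : ∀ i, Even (G i i)) :
    ∃ Q : QuadraticForm ℤ (ι → ℤ), ∀ x y, polar Q x y = bilin G x y := by
  classical
  have hsymm (x y : ι → ℤ) : Matrix.toBilin' G x y = Matrix.toBilin' G y x := by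
    simpa only [bilin_eq_toBilin'] using bilin_comm hG x y
  obtain ⟨Q, hQ⟩ := exists_quadraticForm_polar_eq hsymm
    (even_apply_self_of_basis hsymm (Pi.basisFun ℤ ι) fun i => by simpa using heven i)
  exact ⟨Q, fun x y => (hQ x y).trans (bilin_eq_toBilin' G x y).symm⟩

theorem orthogonal_complement_divisor_two_d_general {ι : Type} [Fintype ι] [DecidableEq ι]
    {G : Matrix ι ι ℤ} (hG : G.IsSymm) (heven : ∀ i, Even (G i i)) (hdet : IsUnit G.det) {d : ℤ}
    (hd : d ≠ 0) (r : ((Fin 2 ⊕ Fin 2) ⊕ ι) ⊕ Fin 1 → ℤ)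
    (hr : bilin (gramTwoULine G d) r r = -(2 * d))
    (hdiv : ∀ l, 2 * d ∣ bilin (gramTwoULine G d) r l) :
    LatIsometric
      (fun x y : orthC (gramTwoULine G d) r => bilin (gramTwoULine G d) x y)
      (bilin (gramTwoU G)) := by
  obtain ⟨Q, hQ⟩ := exists_quadraticForm_polar_eq_bilin hG heven
  have hreflects : PolarReflectsDvd Q := fun k w h =>
    exists_eq_smul_of_dvd_bilin hdet fun u => hQ u w ▸ h u
  let φ := twoUCoords ι
  let Φ := twoULineCoords ι
  have hpolar (x y) : polar (addNegLine (twoHyperbolicSum Q) d) (Φ x) (Φ y) =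
      bilin (gramTwoULine G d) x y := polar_twoULineCoords hQ d x y
  obtain ⟨f, hf, hrange⟩ := exists_isometry_range_eq_orthogonal hreflects hd (r := Φ r)
    (by
      have h := (polar_self _ (Φ r)).symm.trans ((hpolar r r).trans hr)
      rw [nsmul_eq_mul, Nat.cast_ofNat] at h
      linarith)
    (fun p => by
      obtain ⟨l, rfl⟩ := Φ.surjective p
      rw [polar_comm, hpolar]
      exact hdiv l)
  refine latIsometric_orthC (Φ.symm.toLinearMap ∘ₗ f.toLinearMap ∘ₗ φ.toLinearMap)
    (Φ.symm.injective.comp (hf.comp φ.injective)) (fun x => ?_) (fun x y => ?_)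
  · rw [← hpolar, ← hrange]
    exact mem_range_symm_comp_comp Φ.toEquiv f φ.surjective x
  · have hΦ (z) : Φ ((Φ.symm.toLinearMap ∘ₗ f.toLinearMap ∘ₗ φ.toLinearMap) z) = f (φ z) :=
      Φ.apply_symm_apply _
    rw [← hpolar, hΦ, hΦ, polar_isometry_map, polar_twoUCoords hQ]

section E8

theorem gramE8copies_eq_kronecker (m : ℕ) :
    gramE8copies m = 1 ⊗ₖ gramE8neg := by
  ext p q
  simp [gramE8copies, Matrix.one_apply]

theorem isSymm_gramE8copies (m : ℕ) : (gramE8copies m).IsSymm := by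
  rw [gramE8copies_eq_kronecker, Matrix.IsSymm, ← Matrix.kroneckerMap_transpose,
    Matrix.transpose_one, gramE8neg, CartanMatrix.E₈_isSymm.neg.eq]

theorem even_gramE8copies_apply_self (m : ℕ) (i : Fin m × Fin 8) : Even (gramE8copies m i i) := by
  simp [gramE8copies, gramE8neg, CartanMatrix.E₈_diag]

theorem isUnit_det_gramE8copies (m : ℕ) : IsUnit (gramE8copies m).det := by
  simp [gramE8copies_eq_kronecker, Matrix.det_kronecker, gramE8neg, Matrix.det_neg,
    CartanMatrix.E₈_det]

end E8

/-- Let `r` be a primitive vector in `L = L_{2d}^{(m)}` with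
`(r,r) = −2d` and `div(r) = 2d`.  Then the orthogonal complement `K_r`, with the
restricted form, is isometric to the even unimodular lattice `II_{2,8m+2}`. -/
theorem orthogonal_complement_divisor_two_d
    (m d : ℕ) (hd : 1 ≤ d) (r : IdxL m → ℤ) (hprim : IsPrim r)
    (hr : bilin (gramL m d) r r = -(2 * (d : ℤ)))
    (hdiv : IsDivisorOf (gramL m d) r (2 * (d : ℤ))) :
    LatIsometric
      (fun x y : ↥(orthC (gramL m d) r) =>
        bilin (gramL m d) (x : IdxL m → ℤ) (y : IdxL m → ℤ))
      (bilin (gramII m)) :=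
  orthogonal_complement_divisor_two_d_general (isSymm_gramE8copies m)
    (even_gramE8copies_apply_self m) (isUnit_det_gramE8copies m)
    (Int.natCast_ne_zero.2 (Nat.one_le_iff_ne_zero.1 hd)) r hr hdiv.2.1
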